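/- arXiv:1108.4593 — 3 statements merged into one kernel-verified Lean document; each statement's English description precedes it below -/
import Mathlib

section
/- All roots of a polynomial are rational functions of its resolvent: let p ∈ ℚ[X] be a polynomial of degree n with n distinct complex roots r_1, ..., r_n, and let a_1, ..., a_n ∈ ℚ be such that the map σ ↦ Σ_i a_i r_{σ(i)} from S_n to ℂ is injective. Set V = a_1 r_1 + ... + a_n r_n. Then each root r_i lies in the subfield ℚ(V) of ℂ; equivalently, ℚ(r_1, ..., r_n) = ℚ(V). -/
open Polynomial

/-!
Let `p` have coefficients in a field `F` and roots `r_i` in an extension `L`. Since the `r_i` are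
distinct and as many as the degree of `p`, the polynomial `p` is separable and
`K = F(r_1, ..., r_n)` is its splitting field in `L`, so `K / F` is Galois. An `F`-embedding of `K`
into `L` permutes the `r_i`; if it moreover fixes the value `V` of the resolvent, the permutation is
trivial, because distinct permutations give distinct values, and so the embedding is the inclusion.
Hence `V` is a primitive element of `K`.
-/

section Resolvent

variable {F E L ι : Type*} [Field F] [Field E] [Field L] [Algebra F E] [Algebra F L]

open IntermediateField

/-- The polynomial `f` is a resolvent for the family `r`: permuting the `r i` gives pairwise
distinct values of `f`. Here `f` may be any polynomial, not only a linear form. -/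
def IsResolvent (f : MvPolynomial ι F) (r : ι → L) : Prop :=
  Function.Injective fun σ : Equiv.Perm ι => MvPolynomial.aeval (r ∘ σ) f

theorem IsResolvent.injective {f : MvPolynomial ι F} {r : ι → L} (hf : IsResolvent f r) :
    Function.Injective r := by
  classical
  intro i j hij
  have hswap : r ∘ Equiv.swap i j = r := funext (Equiv.apply_swap_eq_self hij)
  have hone : Equiv.swap i j = 1 := hf (by simp [hswap])
  exact Equiv.swap_eq_one_iff.1 hone

/-- The linear form with coefficients `a`, as a polynomial; its values are the linear resolvents
`∑ i, a i * r i`. -/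
noncomputable def linearForm [Fintype ι] (a : ι → F) : MvPolynomial ι F :=
  ∑ i, MvPolynomial.C (a i) * MvPolynomial.X i

theorem aeval_linearForm [Fintype ι] (a : ι → F) (r : ι → L) :
    MvPolynomial.aeval r (linearForm a) = ∑ i, algebraMap F L (a i) * r i := by
  simp [linearForm]

section NatDegreeEqCard

variable [Fintype ι] {p : F[X]} {r : ι → L} (hp : p ≠ 0) (hdeg : p.natDegree = Fintype.card ι)
  (hr : Function.Injective r) (hroots : ∀ i, aeval (r i) p = 0)
include hp hdeg hr hroots

theorem aroots_eq_map_of_natDegree_eq_card : p.aroots L = (Finset.univ.map ⟨r, hr⟩).val := by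
  refine roots_eq_of_natDegree_le_card_of_ne_zero ?_ ?_ (map_ne_zero hp)
  · simpa using hroots
  · simp [hdeg]

theorem splits_of_natDegree_eq_card : (p.map (algebraMap F L)).Splits := by
  rw [splits_iff_card_roots, ← aroots_def, aroots_eq_map_of_natDegree_eq_card hp hdeg hr hroots]
  simp [hdeg]

theorem separable_of_natDegree_eq_card : p.Separable := by
  rw [← nodup_aroots_iff_of_splits hp (splits_of_natDegree_eq_card hp hdeg hr hroots),
    aroots_eq_map_of_natDegree_eq_card hp hdeg hr hroots]
  exact Finset.nodup _

theorem rootSet_eq_range_of_natDegree_eq_card : p.rootSet L = Set.range r := by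
  classical
  rw [rootSet_def, aroots_eq_map_of_natDegree_eq_card hp hdeg hr hroots, Finset.val_toFinset]
  simp

end NatDegreeEqCard

theorem exists_perm_algHom_comp_eq [Finite ι] {p : F[X]} {s : ι → E} (hs : Function.Injective s)
    (φ ψ : E →ₐ[F] L) (hψ : p.rootSet L = Set.range (ψ ∘ s)) :
    ∃ σ : Equiv.Perm ι, φ ∘ s = ψ ∘ s ∘ σ := by
  have hφ_root (i : ι) : φ (s i) ∈ p.rootSet L := by
    have hψ_root : ψ (s i) ∈ p.rootSet L := hψ ▸ ⟨i, rfl⟩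
    rw [mem_rootSet, aeval_algHom_apply, map_eq_zero] at hψ_root ⊢
    exact hψ_root
  have hφ_range (i : ι) : ∃ j, ψ (s j) = φ (s i) := by simpa [hψ] using hφ_root i
  choose g hg using hφ_range
  have hg_inj : Function.Injective g := by
    intro i j hij
    have hφ_eq : φ (s i) = φ (s j) := by rw [← hg, ← hg, hij]
    exact hs (φ.injective hφ_eq)
  exact ⟨Equiv.ofBijective g (Finite.injective_iff_bijective.1 hg_inj),
    funext fun i => (hg i).symm⟩

theorem IsResolvent.algHom_comp_eq [Finite ι] {p : F[X]} {s : ι → E} {φ ψ : E →ₐ[F] L}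
    {f : MvPolynomial ι F} (hf : IsResolvent f (ψ ∘ s)) (hψ : p.rootSet L = Set.range (ψ ∘ s))
    (hV : φ (MvPolynomial.aeval s f) = ψ (MvPolynomial.aeval s f)) : φ ∘ s = ψ ∘ s := by
  obtain ⟨σ, hσ⟩ := exists_perm_algHom_comp_eq hf.injective.of_comp φ ψ hψ
  have hσ_one : σ = 1 := hf <| by
    calc MvPolynomial.aeval (ψ ∘ s ∘ σ) f
        = φ (MvPolynomial.aeval s f) := by rw [← hσ, MvPolynomial.comp_aeval_apply]; rfl
      _ = MvPolynomial.aeval (ψ ∘ s ∘ (1 : Equiv.Perm ι)) f := by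
        rw [hV, MvPolynomial.comp_aeval_apply]; rfl
  simpa [hσ_one] using hσ

theorem adjoin_range_eq_adjoin_aeval [Finite ι] {p : F[X]} {r : ι → L} {f : MvPolynomial ι F}
    (hsep : p.Separable) (hsplits : (p.map (algebraMap F L)).Splits)
    (hrange : p.rootSet L = Set.range r) (hf : IsResolvent f r) :
    adjoin F (Set.range r) = F⟮MvPolynomial.aeval r f⟯ := by
  let K := adjoin F (Set.range r)
  have : p.IsSplittingField F K :=
    isSplittingField_iff.2 ⟨splits_of_splits hsplits fun _ hx => subset_adjoin F _ (hrange ▸ hx),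
      by rw [hrange]⟩
  have : FiniteDimensional F K := IsSplittingField.finiteDimensional K p
  have : IsGalois F K := .of_separable_splitting_field hsep
  let s (i : ι) : K := ⟨r i, subset_adjoin F _ ⟨i, rfl⟩⟩
  let v : K := MvPolynomial.aeval s f
  have hminpoly (x : K) : ((minpoly F x).map (algebraMap F L)).Splits :=
    (Normal.splits' x).of_algHom K.val
  have hv_primitive : F⟮v⟯ = ⊤ := by
    rw [Field.primitive_element_iff_algHom_eq_of_eval F L hminpoly v K.val]
    intro φ hφ
    have hcomp : φ ∘ s = K.val ∘ s := IsResolvent.algHom_comp_eq hf hrange hφ.symm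
    refine algHom_ext_of_eq_adjoin F rfl ?_
    rintro _ ⟨i, rfl⟩
    exact (congrFun hcomp i).symm
  calc K = lift (⊤ : IntermediateField F K) := (lift_top F K).symm
    _ = F⟮(v : L)⟯ := by rw [← hv_primitive, lift_adjoin_simple]
    _ = F⟮MvPolynomial.aeval r f⟯ := by
      congr
      exact MvPolynomial.comp_aeval_apply s K.val f

theorem roots_mem_adjoin_resolvent_general [Fintype ι] (p : F[X])
    (hdeg : p.natDegree = Fintype.card ι) (r : ι → L) (hroots : ∀ i, aeval (r i) p = 0)
    (f : MvPolynomial ι F) (hf : IsResolvent f r) :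
    (∀ i, r i ∈ F⟮MvPolynomial.aeval r f⟯) ∧
      adjoin F (Set.range r) = F⟮MvPolynomial.aeval r f⟯ := by
  wlog hp : p ≠ 0 generalizing p
  · rw [not_not.1 hp, natDegree_zero] at hdeg
    have hempty : IsEmpty ι := Fintype.card_eq_zero_iff.1 hdeg.symm
    exact this 1 (by simp) isEmptyElim one_ne_zero
  have hadjoin : adjoin F (Set.range r) = F⟮MvPolynomial.aeval r f⟯ :=
    adjoin_range_eq_adjoin_aeval
      (separable_of_natDegree_eq_card hp hdeg hf.injective hroots)
      (splits_of_natDegree_eq_card hp hdeg hf.injective hroots)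
      (rootSet_eq_range_of_natDegree_eq_card hp hdeg hf.injective hroots) hf
  exact ⟨fun i => hadjoin ▸ subset_adjoin F _ ⟨i, rfl⟩, hadjoin⟩

end Resolvent

/-- All roots of a polynomial are rational functions of its resolvent: if `p ∈ ℚ[X]` has
degree `n` and `n` distinct complex roots `r_1, ..., r_n`, and the resolvent
`V = Σ_i a_i r_i` takes pairwise distinct values under all permutations of the roots,
then each root lies in `ℚ(V)`; equivalently `ℚ(r_1, ..., r_n) = ℚ(V)`. -/
theorem roots_mem_adjoin_resolvent (n : ℕ) (p : Polynomial ℚ)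
    (hdeg : p.natDegree = n) (r : Fin n → ℂ) (hr : Function.Injective r)
    (hroots : ∀ i, Polynomial.aeval (r i) p = 0) (a : Fin n → ℚ)
    (hres : Function.Injective
      (fun σ : Equiv.Perm (Fin n) => ∑ i, (a i : ℂ) * r (σ i))) :
    (∀ i, r i ∈ IntermediateField.adjoin ℚ {∑ i, (a i : ℂ) * r i}) ∧
    IntermediateField.adjoin ℚ (Set.range r) =
      IntermediateField.adjoin ℚ {∑ i, (a i : ℂ) * r i} := by
  have hcard : p.natDegree = Fintype.card (Fin n) := hdeg.trans (Fintype.card_fin n).symm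
  have ha : IsResolvent (linearForm a) r := by
    simpa only [IsResolvent, aeval_linearForm, eq_ratCast, Function.comp_apply] using hres
  simpa only [aeval_linearForm, eq_ratCast] using
    roots_mem_adjoin_resolvent_general p hcard r hroots (linearForm a) ha
end

section
/- Resolvents differing by a permutation of the roots are rational functions of one another: let p ∈ ℚ[X] be a polynomial of degree n with n distinct complex roots r_1, ..., r_n, and let a_1, ..., a_n ∈ ℚ be such that the map σ ↦ Σ_i a_i r_{σ(i)} from S_n to ℂ is injective. Set V = a_1 r_1 + ... + a_n r_n. Then for every permutation σ ∈ S_n, the value V_σ = Σ_i a_i r_{σ(i)} lies in the subfield ℚ(V) of ℂ. -/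
open Polynomial

/-!
A polynomial `p` over `F` with as many distinct roots `r_i` in `L` as its degree allows is separable
and splits in `L`, so `E = F(r_1, ..., r_n)` is Galois over `F`. An `F`-embedding of `E` into `L`
permutes the roots, hence sends `V` to some `V_π`; if it fixes `V`, then `π = 1`, so it fixes every
root and is the inclusion. An element of `E` that is fixed by no other embedding is primitive:
`F(V) = E`, and `E` contains every `V_σ`.
-/

theorem exists_perm_comp_eq_of_range_subset {ι α : Type*} [Finite ι] {u r : ι → α}
    (hu : Function.Injective u) (h : Set.range u ⊆ Set.range r) :
    ∃ π : Equiv.Perm ι, r ∘ π = u := by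
  obtain ⟨π, rfl⟩ := Set.range_subset_range_iff_exists_comp.1 h
  exact ⟨.ofBijective π (Finite.injective_iff_bijective.1 hu.of_comp), rfl⟩

section RootEnumeration

variable {F L ι : Type*} [Field F] [Field L] [Algebra F L] [Fintype ι] {p : F[X]} {r : ι → L}

theorem aroots_eq_map_univ_of_injective (hp : p ≠ 0) (hdeg : p.natDegree = Fintype.card ι)
    (hr : Function.Injective r) (hroots : ∀ i, aeval (r i) p = 0) :
    p.aroots L = Finset.univ.val.map r := by
  have hmap : p.map (algebraMap F L) ≠ 0 := map_ne_zero hp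
  refine roots_eq_of_natDegree_le_card_of_ne_zero (S := Finset.univ.map ⟨r, hr⟩) ?_ ?_ hmap
  · simpa using hroots
  · simp [hdeg]

theorem rootSet_eq_range_of_injective (hp : p ≠ 0) (hdeg : p.natDegree = Fintype.card ι)
    (hr : Function.Injective r) (hroots : ∀ i, aeval (r i) p = 0) :
    p.rootSet L = Set.range r := by
  classical
  ext x
  simp [rootSet_def, aroots_eq_map_univ_of_injective hp hdeg hr hroots]

theorem splits_map_of_injective_roots (hp : p ≠ 0) (hdeg : p.natDegree = Fintype.card ι)
    (hr : Function.Injective r) (hroots : ∀ i, aeval (r i) p = 0) :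
    (p.map (algebraMap F L)).Splits := by
  rw [splits_iff_card_roots, ← aroots_def, aroots_eq_map_univ_of_injective hp hdeg hr hroots]
  simp [hdeg]

theorem separable_of_injective_roots (hp : p ≠ 0) (hdeg : p.natDegree = Fintype.card ι)
    (hr : Function.Injective r) (hroots : ∀ i, aeval (r i) p = 0) : p.Separable := by
  rw [← nodup_aroots_iff_of_splits hp (splits_map_of_injective_roots hp hdeg hr hroots),
    aroots_eq_map_univ_of_injective hp hdeg hr hroots]
  exact Finset.univ.nodup.map hr

end RootEnumeration

section PrimitiveElement

open IntermediateField

variable {F L : Type*} [Field F] [Field L] [Algebra F L]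

theorem adjoin_simple_eq_of_forall_algHom_eq_val {E : IntermediateField F L}
    [FiniteDimensional F E] [IsGalois F E] (x : E)
    (h : ∀ ψ : E →ₐ[F] L, ψ x = x → ψ = E.val) : F⟮(x : L)⟯ = E := by
  have hsplits (y : E) : ((minpoly F y).map (algebraMap F L)).Splits :=
    (Normal.splits inferInstance y).of_algHom E.val
  have htop : F⟮x⟯ = ⊤ :=
    (Field.primitive_element_iff_algHom_eq_of_eval F L hsplits x E.val).2
      fun ψ hψ => (h ψ hψ.symm).symm
  rw [← lift_adjoin_simple, htop, lift_top]

theorem algHom_apply_mem_rootSet {E : IntermediateField F L} (ψ : E →ₐ[F] L) {p : F[X]} {x : E}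
    (hx : (x : L) ∈ p.rootSet L) : ψ x ∈ p.rootSet L := by
  have hroot : aeval x p = 0 :=
    E.val.injective (by simpa [aeval_algHom_apply] using aeval_eq_zero_of_mem_rootSet hx)
  exact mem_rootSet.2 ⟨ne_zero_of_mem_rootSet hx, by rw [aeval_algHom_apply, hroot, map_zero]⟩

theorem aeval_comp_mem_adjoin_range {ι κ : Type*} (r : ι → L) (g : κ → ι) (f : MvPolynomial κ F) :
    MvPolynomial.aeval (r ∘ g) f ∈ adjoin F (Set.range r) := by
  have hmem : MvPolynomial.aeval (r ∘ g) f ∈ Algebra.adjoin F (Set.range (r ∘ g)) :=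
    (Algebra.adjoin_range_eq_range_aeval F (r ∘ g)).ge ⟨f, rfl⟩
  exact adjoin.mono F _ _ (Set.range_comp_subset_range g r) (algebra_adjoin_le_adjoin F _ hmem)

theorem adjoin_simple_aeval_eq_adjoin_range {ι : Type*} [Finite ι] {p : F[X]} {r : ι → L}
    (hsep : p.Separable) (hsplits : (p.map (algebraMap F L)).Splits)
    (hr : Function.Injective r) (hroots : p.rootSet L = Set.range r) (f : MvPolynomial ι F)
    (hf : ∀ π : Equiv.Perm ι, MvPolynomial.aeval (r ∘ π) f = MvPolynomial.aeval r f → π = 1) :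
    F⟮MvPolynomial.aeval r f⟯ = adjoin F (Set.range r) := by
  set E := adjoin F (Set.range r) with hE
  have : p.IsSplittingField F E := by
    rw [hE, ← hroots]
    exact adjoin_rootSet_isSplittingField hsplits
  have : FiniteDimensional F E := IsSplittingField.finiteDimensional E p
  have : IsGalois F E := IsGalois.of_separable_splitting_field hsep
  let s (i : ι) : E := ⟨r i, subset_adjoin F _ ⟨i, rfl⟩⟩
  have aeval_s (ψ : E →ₐ[F] L) :
      ψ (MvPolynomial.aeval s f) = MvPolynomial.aeval (ψ ∘ s) f :=
    MvPolynomial.comp_aeval_apply ..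
  have hval : (MvPolynomial.aeval s f : L) = MvPolynomial.aeval r f := aeval_s E.val
  rw [← hval]
  refine adjoin_simple_eq_of_forall_algHom_eq_val _ fun ψ hψ => ?_
  have hs : Function.Injective (ψ ∘ s) :=
    ψ.injective.comp fun i j hij => hr (congrArg Subtype.val hij)
  have hrange : Set.range (ψ ∘ s) ⊆ Set.range r := by
    rintro _ ⟨i, rfl⟩
    rw [← hroots]
    exact algHom_apply_mem_rootSet ψ (hroots ▸ ⟨i, rfl⟩)
  obtain ⟨π, hπ⟩ := exists_perm_comp_eq_of_range_subset hs hrange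
  obtain rfl : π = 1 := hf π (by rw [hπ, ← aeval_s, hψ, hval])
  refine algHom_ext_of_eq_adjoin F hE ?_
  rintro _ ⟨i, rfl⟩
  exact (congrFun hπ i).symm

theorem permuted_resolvent_mem_adjoin_resolvent_general {ι : Type*} [Fintype ι] {p : F[X]}
    (hdeg : p.natDegree = Fintype.card ι) {r : ι → L} (hr : Function.Injective r)
    (hroots : ∀ i, aeval (r i) p = 0) (f : MvPolynomial ι F)
    (hf : ∀ π : Equiv.Perm ι, MvPolynomial.aeval (r ∘ π) f = MvPolynomial.aeval r f → π = 1)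
    (σ : Equiv.Perm ι) :
    MvPolynomial.aeval (r ∘ σ) f ∈ F⟮MvPolynomial.aeval r f⟯ := by
  rcases eq_or_ne p 0 with rfl | hp
  · have : IsEmpty ι := Fintype.card_eq_zero_iff.1 (by simpa using hdeg.symm)
    rw [Subsingleton.elim (r ∘ σ) r]
    exact mem_adjoin_simple_self F _
  rw [adjoin_simple_aeval_eq_adjoin_range (separable_of_injective_roots hp hdeg hr hroots)
    (splits_map_of_injective_roots hp hdeg hr hroots) hr
    (rootSet_eq_range_of_injective hp hdeg hr hroots) f hf]
  exact aeval_comp_mem_adjoin_range r σ f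

end PrimitiveElement

/-- Resolvents differing by a permutation of the roots are rational functions of one
another: with `p`, `r`, `a`, `V = Σ_i a_i r_i` as in the resolvent setup, for every
permutation `σ` the value `V_σ = Σ_i a_i r_{σ(i)}` lies in `ℚ(V)`. -/
theorem permuted_resolvent_mem_adjoin_resolvent (n : ℕ) (p : Polynomial ℚ)
    (hdeg : p.natDegree = n) (r : Fin n → ℂ) (hr : Function.Injective r)
    (hroots : ∀ i, Polynomial.aeval (r i) p = 0) (a : Fin n → ℚ)
    (hres : Function.Injective
      (fun σ : Equiv.Perm (Fin n) => ∑ i, (a i : ℂ) * r (σ i))) :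
    ∀ σ : Equiv.Perm (Fin n),
      (∑ i, (a i : ℂ) * r (σ i)) ∈
        IntermediateField.adjoin ℚ {∑ i, (a i : ℂ) * r i} := by
  simpa using permuted_resolvent_mem_adjoin_resolvent_general (by simpa using hdeg) hr hroots
    (∑ i, .C (a i) * .X i) fun π hπ => hres (by simpa using hπ)
end

section
/- The (p−1)-th power of the Lagrange resolvent of a prime cyclotomic equation is a known quantity: let p be an odd prime, ζ ∈ ℂ a primitive p-th root of unity, β ∈ ℂ a primitive (p−1)-th root of unity, and g an integer that is a primitive root modulo p. Define t = Σ_{k=0}^{p−2} β^k ζ^{g^k}. Then t^{p−1} lies in the cyclotomic field ℚ(β). -/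
/-!
Expand a product of Gauss sums as `∑ s, J s * ψ s`, where `J s` is the sum of `∏ i, χ i (a i)` over
the tuples `a` with `∑ i, a i = s`. Scaling tuples by a unit `u` multiplies `J` by `(∏ i, χ i) u`,
so when `∏ i, χ i = 1` and the domain is a field, `J` is constant away from `0`. The additive
character then enters only through `∑ s, ψ s`, an integer, and the product lies in every ring
containing the values of the `χ i`. Read on the coefficients `J s`, this is the Galois invariance of
the power of the resolvent under `ζ ↦ ζ ^ g`. The resolvent itself is the Gauss sum of the
multiplicative character sending `g` to `β`, whose `(p - 1)`-th power is trivial.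
-/

open Finset

section Characters

lemma addChar_map_sum_eq_prod {ι A M : Type*} [AddCommMonoid A] [CommMonoid M] (ψ : AddChar A M)
    (s : Finset ι) (a : ι → A) : ψ (∑ i ∈ s, a i) = ∏ i ∈ s, ψ (a i) :=
  map_prod ψ.toMonoidHom (fun i ↦ Multiplicative.ofAdd (a i)) s

lemma mulChar_prod_apply_coe {ι M M' : Type*} [CommMonoid M] [CommMonoidWithZero M']
    (s : Finset ι) (χ : ι → MulChar M M') (u : Mˣ) : (∏ i ∈ s, χ i) u = ∏ i ∈ s, χ i u := by
  classical
  induction s using Finset.induction_on with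
  | empty => simp
  | insert i s hi ih => rw [prod_insert hi, prod_insert hi, MulChar.mul_apply, ih]

end Characters

section MultiJacobiSum

variable {ι R R' : Type*} [Fintype ι] [DecidableEq ι] [CommRing R] [Fintype R] [DecidableEq R]
  [CommRing R']

/-- The Jacobi sum of a finite family of multiplicative characters, taken over the tuples with
coordinate sum `s`. For `s = 1` it is the usual `J(χ₁, …, χₙ)` and for `s = 0` it is the variant
`J₀(χ₁, …, χₙ)`; all `s` are allowed since these sums are the coefficients of a product of Gauss
sums. -/
def multiJacobiSum (χ : ι → MulChar R R') (s : R) : R' :=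
  ∑ a : ι → R with ∑ i, a i = s, ∏ i, χ i (a i)

lemma prod_gaussSum_eq_sum_multiJacobiSum_mul (χ : ι → MulChar R R') (ψ : AddChar R R') :
    ∏ i, gaussSum (χ i) ψ = ∑ s, multiJacobiSum χ s * ψ s := by
  calc ∏ i, gaussSum (χ i) ψ
      = ∑ a : ι → R, (∏ i, χ i (a i)) * ψ (∑ i, a i) := by
        simp only [gaussSum, Fintype.prod_sum, prod_mul_distrib, addChar_map_sum_eq_prod]
    _ = ∑ s, ∑ a : ι → R with ∑ i, a i = s, (∏ i, χ i (a i)) * ψ (∑ i, a i) :=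
        (sum_fiberwise _ _ _).symm
    _ = ∑ s, multiJacobiSum χ s * ψ s := by
        refine sum_congr rfl fun s _ ↦ ?_
        rw [multiJacobiSum, sum_mul]
        exact sum_congr rfl fun a ha ↦ by rw [(mem_filter.mp ha).2]

lemma multiJacobiSum_units_mul (χ : ι → MulChar R R') (u : Rˣ) (s : R) :
    multiJacobiSum χ (u * s) = (∏ i, χ i) u * multiJacobiSum χ s := by
  rw [multiJacobiSum, multiJacobiSum, mulChar_prod_apply_coe, mul_sum]
  refine (sum_equiv (MulAction.toPerm u) (fun a ↦ ?_) fun a _ ↦ ?_).symm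
  · simp [Units.smul_def, ← mul_sum]
  · simp [Units.smul_def, prod_mul_distrib]

lemma multiJacobiSum_mem {S : Type*} [SetLike S R'] [SubsemiringClass S R'] {A : S}
    {χ : ι → MulChar R R'} (hA : ∀ i a, χ i a ∈ A) (s : R) : multiJacobiSum χ s ∈ A :=
  sum_mem fun a _ ↦ prod_mem fun i _ ↦ hA i (a i)

end MultiJacobiSum

section Field

variable {ι F R : Type*} [Fintype ι] [Field F] [Fintype F] [CommRing R]

lemma multiJacobiSum_eq_of_ne_zero [DecidableEq ι] [DecidableEq F] {χ : ι → MulChar F R}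
    (hχ : ∏ i, χ i = 1) {s : F} (hs : s ≠ 0) : multiJacobiSum χ s = multiJacobiSum χ 1 := by
  have h := multiJacobiSum_units_mul χ (Units.mk0 s hs) 1
  rwa [hχ, MulChar.one_apply_coe, one_mul, mul_one, Units.val_mk0] at h

lemma prod_gaussSum_eq_of_prod_eq_one [DecidableEq ι] [DecidableEq F] {χ : ι → MulChar F R}
    (hχ : ∏ i, χ i = 1) (ψ : AddChar F R) :
    ∏ i, gaussSum (χ i) ψ = multiJacobiSum χ 0 + multiJacobiSum χ 1 * (∑ a, ψ a - 1) := by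
  rw [prod_gaussSum_eq_sum_multiJacobiSum_mul, Fintype.sum_eq_add_sum_compl 0,
    Fintype.sum_eq_add_sum_compl 0, AddChar.map_zero_eq_one, mul_one,
    add_sub_cancel_left, mul_sum]
  congr 1
  refine sum_congr rfl fun s hs ↦ ?_
  rw [multiJacobiSum_eq_of_ne_zero hχ (by simpa using hs)]

lemma prod_gaussSum_mem_of_prod_eq_one [IsDomain R] {S : Type*} [SetLike S R] [SubringClass S R]
    {A : S} {χ : ι → MulChar F R} (hA : ∀ i a, χ i a ∈ A) (hχ : ∏ i, χ i = 1) (ψ : AddChar F R) :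
    ∏ i, gaussSum (χ i) ψ ∈ A := by
  classical
  have hψ : ∑ a, ψ a ∈ A := by
    rw [AddChar.sum_eq_ite]
    split_ifs
    exacts [natCast_mem A _, zero_mem A]
  rw [prod_gaussSum_eq_of_prod_eq_one hχ]
  exact add_mem (multiJacobiSum_mem hA 0)
    (mul_mem (multiJacobiSum_mem hA 1) (sub_mem hψ (one_mem A)))

lemma gaussSum_pow_mem_of_pow_eq_one [IsDomain R] {S : Type*} [SetLike S R] [SubringClass S R]
    {A : S} {χ : MulChar F R} (hA : ∀ a, χ a ∈ A) {n : ℕ} (hχ : χ ^ n = 1) (ψ : AddChar F R) :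
    gaussSum χ ψ ^ n ∈ A := by
  simpa using prod_gaussSum_mem_of_prod_eq_one (ι := Fin n) (fun _ ↦ hA) (by simpa using hχ) ψ

end Field

section CyclicUnits

open Subgroup

lemma sum_range_natCard_pow_eq_sum {G M : Type*} [Group G] [Fintype G] [AddCommMonoid M] {g : G}
    (hg : ∀ x, x ∈ zpowers g) (f : G → M) :
    ∑ k ∈ range (Nat.card G), f (g ^ k) = ∑ x, f x := by
  classical
  have hinj : Set.InjOn (g ^ ·) (range (Nat.card G) : Set ℕ) := by
    rw [coe_range, ← orderOf_eq_card_of_forall_mem_zpowers hg]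
    exact pow_injOn_Iio_orderOf
  rw [← IsCyclic.image_range_card hg, sum_image hinj]

lemma gaussSum_eq_sum_units {R R' : Type*} [CommRing R] [Fintype R] [Fintype Rˣ] [CommRing R']
    (χ : MulChar R R') (ψ : AddChar R R') : gaussSum χ ψ = ∑ u : Rˣ, χ u * ψ u := by
  refine (Fintype.sum_of_injective Units.val Units.val_injective _ _ (fun a ha ↦ ?_)
    fun _ ↦ rfl).symm
  rw [χ.map_nonunit ha, zero_mul]

lemma gaussSum_eq_sum_range_pow {R R' : Type*} [CommRing R] [Fintype R] [CommRing R'] {g : Rˣ}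
    (hg : ∀ x, x ∈ zpowers g) (χ : MulChar R R') (ψ : AddChar R R') :
    gaussSum χ ψ = ∑ k ∈ range (Nat.card Rˣ), χ g ^ k * ψ (g ^ k) := by
  have := Fintype.ofFinite Rˣ
  rw [gaussSum_eq_sum_units, ← sum_range_natCard_pow_eq_sum hg]
  simp only [Units.val_pow_eq_pow_val, map_pow]

lemma mulChar_apply_mem_algebraAdjoin_of_forall_mem_zpowers {M R : Type*} [CommMonoid M]
    [Finite Mˣ] [CommRing R] {g : Mˣ} (hg : ∀ x, x ∈ zpowers g) (χ : MulChar M R) (a : M) :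
    χ a ∈ Algebra.adjoin ℤ {χ g} := by
  by_cases ha : IsUnit a
  · obtain ⟨u, rfl⟩ := ha
    obtain ⟨k, rfl⟩ := mem_powers_iff_mem_zpowers.mpr (hg u)
    simpa using pow_mem (Algebra.self_mem_adjoin_singleton ℤ (χ g)) k
  · rw [χ.map_nonunit ha]
    exact zero_mem _

lemma exists_mulChar_apply_eq_of_forall_mem_zpowers {M M' : Type*} [CommMonoid M] [Finite Mˣ]
    [CommMonoidWithZero M'] {g : Mˣ} (hg : ∀ x, x ∈ zpowers g) {β : M'}
    (hβ : β ^ Nat.card Mˣ = 1) : ∃ χ : MulChar M M', χ g = β := by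
  obtain ⟨β, rfl⟩ : IsUnit β := .of_pow_eq_one hβ Nat.card_pos.ne'
  have horder : orderOf β ∣ orderOf g := by
    rw [orderOf_eq_card_of_forall_mem_zpowers hg, orderOf_dvd_iff_pow_eq_one]
    exact Units.ext hβ
  refine ⟨.ofUnitHom (monoidHomOfForallMemZpowers hg horder), ?_⟩
  rw [MulChar.ofUnitHom_coe, monoidHomOfForallMemZpowers_apply_gen]

end CyclicUnits

lemma sum_range_pow_mul_addChar_pow_mem_algebraAdjoin {F R : Type*} [Field F] [Finite F]
    [CommRing R] [IsDomain R] (ψ : AddChar F R) {g : Fˣ} (hg : ∀ x, x ∈ Subgroup.zpowers g) {β : R}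
    (hβ : β ^ Nat.card Fˣ = 1) :
    (∑ k ∈ range (Nat.card Fˣ), β ^ k * ψ (g ^ k)) ^ Nat.card Fˣ ∈ Algebra.adjoin ℤ {β} := by
  have := Fintype.ofFinite F
  have := Fintype.ofFinite Fˣ
  obtain ⟨χ, rfl⟩ := exists_mulChar_apply_eq_of_forall_mem_zpowers hg hβ
  have hχ : χ ^ Nat.card Fˣ = 1 := by rw [Nat.card_eq_fintype_card, χ.pow_card_eq_one]
  rw [← gaussSum_eq_sum_range_pow hg]
  exact gaussSum_pow_mem_of_pow_eq_one
    (mulChar_apply_mem_algebraAdjoin_of_forall_mem_zpowers hg χ) hχ ψ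

theorem resolvent_power_mem_adjoin_beta_general {R : Type*} [CommRing R] [IsDomain R] {p : ℕ}
    (hp : p.Prime) {ζ β : R} (hζ : ζ ^ p = 1) (hβ : β ^ (p - 1) = 1) {g : ℕ}
    (hg : IsPrimitiveRoot (g : ZMod p) (p - 1)) :
    (∑ k ∈ range (p - 1), β ^ k * ζ ^ (g ^ k)) ^ (p - 1) ∈ Algebra.adjoin ℤ {β} := by
  have : Fact p.Prime := ⟨hp⟩
  have hcard : Nat.card (ZMod p)ˣ = p - 1 := by rw [Nat.card_eq_fintype_card, ZMod.card_units]
  obtain ⟨u, hu⟩ := hg.isUnit (Nat.sub_ne_zero_of_lt hp.one_lt)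
  rw [← hu, IsPrimitiveRoot.coe_units_iff] at hg
  have hgen : Subgroup.zpowers u = ⊤ :=
    Subgroup.eq_top_of_card_eq _ (by rw [Nat.card_zpowers, ← hg.eq_orderOf, hcard])
  have hψ (k : ℕ) : AddChar.zmodChar p hζ (u ^ k) = ζ ^ g ^ k := by
    rw [hu, ← Nat.cast_pow, AddChar.zmodChar_apply']
  simpa only [hψ, hcard] using sum_range_pow_mul_addChar_pow_mem_algebraAdjoin
    (AddChar.zmodChar p hζ) ((Subgroup.eq_top_iff' _).mp hgen) (hcard.symm ▸ hβ)

/-- The `(p−1)`-th power of the Lagrange resolvent of a prime cyclotomic equation is a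
known quantity: for an odd prime `p`, a primitive `p`-th root of unity `ζ`, a primitive
`(p−1)`-th root of unity `β`, and a primitive root `g` modulo `p`, the quantity
`t = Σ_{k=0}^{p−2} β^k ζ^{g^k}` satisfies `t^{p−1} ∈ ℚ(β)`. -/
theorem resolvent_power_mem_adjoin_beta (p : ℕ) (hp : p.Prime) (hodd : Odd p)
    (ζ β : ℂ) (hζ : IsPrimitiveRoot ζ p) (hβ : IsPrimitiveRoot β (p - 1))
    (g : ℕ) (hg : IsPrimitiveRoot (g : ZMod p) (p - 1)) :
    (∑ k ∈ Finset.range (p - 1), β ^ k * ζ ^ (g ^ k)) ^ (p - 1) ∈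
      IntermediateField.adjoin ℚ {β} :=
  Algebra.adjoin_le (S := (IntermediateField.adjoin ℚ {β}).toSubalgebra.restrictScalars ℤ)
    (IntermediateField.subset_adjoin ℚ {β})
    (resolvent_power_mem_adjoin_beta_general hp hζ.pow_eq_one hβ.pow_eq_one hg)
end
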